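/- arXiv:math/0502555 — 2 statements merged into one kernel-verified Lean document; each statement's English description precedes it below -/
import Mathlib

section
/- Let n ≥ 1, let V : ℝⁿ → ℝ be smooth, and let Φ be a global Hamiltonian flow for V; write Φ(t,(y,η)) = (x(t,y,η), ξ(t,y,η)). Fix t₀ ∈ ℝ and (y₀,η₀) ∈ ℝⁿ × ℝⁿ, set (x₀,ξ₀) = Φ(t₀,(y₀,η₀)), and assume the n×n Jacobian of η ↦ x(t₀, y₀, η) at η₀ is invertible. Then there exist an open neighborhood U of (y₀,η₀) in ℝⁿ × ℝⁿ, an open neighborhood Ω of (x₀,y₀) in ℝⁿ × ℝⁿ, and a smooth function ψ : Ω → ℝ such that: (i) for every (y,η) ∈ U, writing (x,ξ) = Φ(t₀,(y,η)), one has (x,y) ∈ Ω, ξ = ∇_x ψ(x,y), and η = −∇_y ψ(x,y); and (ii) the n×n matrix of mixed second partial derivatives (∂²ψ/∂xᵢ∂yⱼ)(x₀,y₀) is invertible. That is, near (y₀,−η₀; x₀,ξ₀) the (twisted) graph of Φ(t₀,·) is generated by the generating function ψ. -/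
open scoped RealInnerProductSpace
open Filter

noncomputable section

/-- Euclidean configuration space `ℝⁿ`. -/
abbrev Euc (n : ℕ) := EuclideanSpace ℝ (Fin n)

/-- The Hamiltonian `p(x, ξ) = ½‖ξ‖² + V(x)` on phase space `ℝⁿ × ℝⁿ`. -/
def Ham (n : ℕ) (V : Euc n → ℝ) (z : Euc n × Euc n) : ℝ :=
  (1 / 2) * ‖z.2‖ ^ 2 + V z.1

/-- The Hamiltonian vector field `X_p(x, ξ) = (ξ, −∇V(x))`. -/
def HamVF (n : ℕ) (V : Euc n → ℝ) (z : Euc n × Euc n) : Euc n × Euc n :=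
  (z.2, -gradient V z.1)

/-- `Φ` is a global Hamiltonian flow for the potential `V`: a smooth map
`ℝ × (ℝⁿ × ℝⁿ) → ℝⁿ × ℝⁿ` with `Φ 0 z = z`, `∂ₜΦ(t,z) = X_p(Φ(t,z))` and the
group law `Φ(s+t, z) = Φ(s, Φ(t, z))`. -/
def IsGlobalHamFlow (n : ℕ) (V : Euc n → ℝ)
    (Φ : ℝ → Euc n × Euc n → Euc n × Euc n) : Prop :=
  ContDiff ℝ (⊤ : ℕ∞) (fun q : ℝ × (Euc n × Euc n) => Φ q.1 q.2) ∧
  (∀ z, Φ 0 z = z) ∧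
  (∀ t z, HasDerivAt (fun s => Φ s z) (HamVF n V (Φ t z)) t) ∧
  (∀ s t z, Φ (s + t) z = Φ s (Φ t z))


theorem param_int {E : Type*} [NormedAddCommGroup E] [NormedSpace ℝ E] [FiniteDimensional ℝ E]
    (G : ℝ × E → ℝ) (hG : ContDiff ℝ (⊤ : ℕ∞) G) (t : ℝ) (z : E) :
    HasFDerivAt (fun z => ∫ s in (0:ℝ)..t, G (s, z))
      (∫ s in (0:ℝ)..t, (fderiv ℝ G (s, z)).comp (ContinuousLinearMap.inr ℝ ℝ E)) z := by
  have hc : Continuous (fun q : ℝ × E => (fderiv ℝ G q).comp (ContinuousLinearMap.inr ℝ ℝ E)) :=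
    (hG.continuous_fderiv (by simp)).clm_comp continuous_const
  have := FiniteDimensional.proper ℝ E
  obtain ⟨C, hC⟩ := ((isCompact_uIcc (a := (0:ℝ)) (b := t)).prod
    (isCompact_closedBall z 1)).exists_bound_of_continuousOn hc.continuousOn
  refine intervalIntegral.hasFDerivAt_integral_of_dominated_of_fderiv_le
    (F := fun z s => G (s, z)) (bound := fun _ => C)
    (F' := fun z s => (fderiv ℝ G (s, z)).comp (ContinuousLinearMap.inr ℝ ℝ E))
    (Metric.closedBall_mem_nhds z one_pos) ?_ ?_ ?_ ?_ ?_ ?_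
  · refine Filter.Eventually.of_forall fun x => Continuous.aestronglyMeasurable ?_
    exact hG.continuous.comp (by fun_prop)
  · exact Continuous.intervalIntegrable (hG.continuous.comp (by fun_prop)) _ _
  · exact Continuous.aestronglyMeasurable (hc.comp (g := fun q : ℝ × E => (fderiv ℝ G q).comp (ContinuousLinearMap.inr ℝ ℝ E)) (f := fun s : ℝ => (s, z)) (by fun_prop))
  · exact Filter.Eventually.of_forall fun s hs x hx => hC (s, x) ⟨Set.uIoc_subset_uIcc hs, hx⟩
  · exact intervalIntegrable_const
  · refine Filter.Eventually.of_forall fun s hs x hx => ?_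
    exact ((hG.differentiable (by simp)) (s, x)).hasFDerivAt.comp x (hasFDerivAt_prodMk_right s x)

theorem param_int' {E : Type*} [NormedAddCommGroup E] [NormedSpace ℝ E] [FiniteDimensional ℝ E]
    (G : ℝ × E → ℝ) (hG : ContDiff ℝ (⊤ : ℕ∞) G) (t : ℝ) (z : E) (θ : ℝ → E →L[ℝ] ℝ)
    (hθ : ∀ s v, HasDerivAt (fun s => θ s v) (fderiv ℝ G (s, z) (0, v)) s) :
    HasFDerivAt (fun z => ∫ s in (0:ℝ)..t, G (s, z)) (θ t - θ 0) z := by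
  convert param_int G hG t z using 1
  have hc : Continuous (fun s : ℝ => (fderiv ℝ G (s, z)).comp (ContinuousLinearMap.inr ℝ ℝ E)) :=
    ((hG.continuous_fderiv (by simp)).comp (by fun_prop : Continuous fun s : ℝ => (s, z))).clm_comp
      continuous_const
  ext v
  rw [ContinuousLinearMap.intervalIntegral_apply (hc.intervalIntegrable _ _)]
  rw [intervalIntegral.integral_eq_sub_of_hasDerivAt (f := fun s => θ s v)]
  · simp
  · intro s _
    simpa using hθ s v
  · exact (hc.clm_apply continuous_const).intervalIntegrable _ _

/-- the action differential -/
theorem action_fderiv (n : ℕ) (V : Euc n → ℝ) (hV : ContDiff ℝ (⊤ : ℕ∞) V)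
    (Φ : ℝ → Euc n × Euc n → Euc n × Euc n) (hΦ : IsGlobalHamFlow n V Φ) (t : ℝ) :
    ∃ S : Euc n × Euc n → ℝ, ∀ z, HasFDerivAt S
      ((innerSL ℝ (Φ t z).2).comp ((ContinuousLinearMap.fst ℝ _ _).comp (fderiv ℝ (Φ t) z))
        - (innerSL ℝ z.2).comp (ContinuousLinearMap.fst ℝ _ _)) z := by
  obtain ⟨hs, h0, hd, -⟩ := hΦ
  set F : ℝ × (Euc n × Euc n) → Euc n × Euc n := fun q => Φ q.1 q.2 with hF
  have hFd : ∀ q, HasFDerivAt F (fderiv ℝ F q) q := fun q =>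
    (hs.differentiable (by simp) q).hasFDerivAt
  have hsp : ∀ s z, HasFDerivAt (Φ s) ((fderiv ℝ F (s, z)).comp (ContinuousLinearMap.inr ℝ _ _)) z :=
    fun s z => (hFd (s, z)).comp z (hasFDerivAt_prodMk_right s z)
  have htime : ∀ q, fderiv ℝ F q (1, 0) = HamVF n V (F q) := by
    rintro ⟨s, z⟩
    have h1 : HasDerivAt (fun s => Φ s z) (fderiv ℝ F (s, z) (1, 0)) s := by
      have := (hFd (s, z)).comp_hasDerivAt s ((hasDerivAt_id s).prodMk (hasDerivAt_const s z))
      exact this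
    exact h1.unique (hd s z)
  have hF2 : ContDiff ℝ (⊤ : ℕ∞) (fderiv ℝ F) := hs.fderiv_right (by simp)
  have hVd : ∀ x, HasGradientAt V (gradient V x) x := fun x =>
    (hV.differentiable (by simp) x).hasGradientAt
  have hgV : ContDiff ℝ (⊤ : ℕ∞) (gradient V) := by
    have : ContDiff ℝ (⊤ : ℕ∞) (fderiv ℝ V) := hV.fderiv_right (by simp)
    exact (InnerProductSpace.toDual ℝ (Euc n)).symm.contDiff.comp this
  -- mixed derivative, first component
  have hmix : ∀ s z v, HasDerivAt (fun s => fderiv ℝ F (s, z) (0, v))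
      (fderiv ℝ (fun q => HamVF n V (F q)) (s, z) (0, v)) s := by
    intro s z v
    have hF2d := (hF2.differentiable (by simp) (s, z)).hasFDerivAt
    have h1 : HasDerivAt (fun s => fderiv ℝ F (s, z)) (fderiv ℝ (fderiv ℝ F) (s, z) (1, 0)) s :=
      hF2d.comp_hasDerivAt s ((hasDerivAt_id s).prodMk (hasDerivAt_const s z))
    have h2 := h1.clm_apply (hasDerivAt_const s ((0 : ℝ), v))
    convert! h2 using 1
    have hsym := second_derivative_symmetric hFd hF2d (1, 0) (0, v)
    rw [hsym]
    have h3 : HasFDerivAt (fun q => fderiv ℝ F q (1, 0)) _ (s, z) :=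
      hF2d.clm_apply (hasFDerivAt_const ((1 : ℝ), (0 : Euc n × Euc n)) (s, z))
    have h4 : (fun q => HamVF n V (F q)) = (fun q => fderiv ℝ F q (1, 0)) := by
      funext q; exact (htime q).symm
    rw [h4, h3.fderiv]
    simp
  have hX1 : ∀ q v, (fderiv ℝ (fun q => HamVF n V (F q)) q v).1 = (fderiv ℝ F q v).2 := by
    intro q v
    have hdX : DifferentiableAt ℝ (fun q => HamVF n V (F q)) q := by
      have : ContDiff ℝ (⊤ : ℕ∞) (fun q => HamVF n V (F q)) := by
        unfold HamVF
        exact hs.snd.prodMk (hgV.comp hs.fst).neg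
      exact this.differentiable (by simp) q
    have h1 := hdX.hasFDerivAt.fst
    have h2 : HasFDerivAt (fun q => (HamVF n V (F q)).1) _ q := (hFd q).snd
    have := congrArg (fun L => L v) (h1.unique h2)
    simpa using this
  set G : ℝ × (Euc n × Euc n) → ℝ := fun q => (1/2) * ⟪(F q).2, (F q).2⟫ - V (F q).1 with hGdef
  have hG : ContDiff ℝ (⊤ : ℕ∞) G :=
    (contDiff_const.mul (hs.snd.inner ℝ hs.snd)).sub (hV.comp hs.fst)
  have hGd : ∀ q v, fderiv ℝ G q v = ⟪(F q).2, (fderiv ℝ F q v).2⟫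
      - ⟪gradient V (F q).1, (fderiv ℝ F q v).1⟫ := by
    intro q v
    have h1 : HasFDerivAt G _ q :=
      (((hFd q).snd.inner ℝ (hFd q).snd).const_mul (1/2)).sub
        ((hVd (F q).1).hasFDerivAt.comp q (hFd q).fst)
    rw [h1.fderiv]
    simp [real_inner_comm]
    ring
  refine ⟨fun z => ∫ s in (0:ℝ)..t, G (s, z), fun z => ?_⟩
  have key := param_int' G hG t z (fun s => (innerSL ℝ (Φ s z).2).comp
    ((ContinuousLinearMap.fst ℝ _ _).comp
      ((fderiv ℝ F (s, z)).comp (ContinuousLinearMap.inr ℝ _ _)))) ?_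
  · convert! key using 2
    · rw [(hsp t z).fderiv]
    · have : (fderiv ℝ F (0, z)).comp (ContinuousLinearMap.inr ℝ _ _)
          = ContinuousLinearMap.id ℝ _ := by
        refine (hsp 0 z).unique ?_
        have : Φ 0 = id := funext h0
        rw [this]
        exact hasFDerivAt_id z
      rw [this, h0]
      rfl
  · intro s v
    have h1 : HasDerivAt (fun s => (Φ s z).2) (HamVF n V (Φ s z)).2 s := by
      simpa using (hd s z).hasFDerivAt.snd.hasDerivAt
    have h2 : HasDerivAt (fun s => (fderiv ℝ F (s, z) (0, v)).1)
        (fderiv ℝ (fun q => HamVF n V (F q)) (s, z) (0, v)).1 s := by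
      simpa using (hmix s z v).hasFDerivAt.fst.hasDerivAt
    have h3 := h1.inner ℝ h2
    convert! h3 using 1
    · rw [hX1, hGd]
      simp [HamVF, hF]
      ring

/-- **Generating function for the flow near a central-field point.**  If the Jacobian
of `η ↦ x(t₀, y₀, η)` at `η₀` is invertible then, with `(x₀, ξ₀) = Φ(t₀, (y₀, η₀))`,
there are neighborhoods `U ∋ (y₀, η₀)`, `Ω ∋ (x₀, y₀)` and a smooth `ψ : Ω → ℝ` such
that for `(y, η) ∈ U`, writing `(x, ξ) = Φ(t₀, (y, η))`, one has `(x, y) ∈ Ω`,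
`ξ = ∇ₓψ(x, y)`, `η = −∇_yψ(x, y)`, and the matrix of mixed second partials
`∂²ψ/∂x∂y` at `(x₀, y₀)` is invertible. -/
theorem flow_graph_has_generating_function
    (n : ℕ) (hn : 1 ≤ n)
    (V : Euc n → ℝ) (hV : ContDiff ℝ (⊤ : ℕ∞) V)
    (Φ : ℝ → Euc n × Euc n → Euc n × Euc n) (hΦ : IsGlobalHamFlow n V Φ)
    (t₀ : ℝ) (y₀ η₀ x₀ ξ₀ : Euc n) (hxξ : (x₀, ξ₀) = Φ t₀ (y₀, η₀))
    (hcf : IsUnit (fderiv ℝ (fun η => (Φ t₀ (y₀, η)).1) η₀)) :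
    ∃ U Ω : Set (Euc n × Euc n), IsOpen U ∧ IsOpen Ω ∧
      (y₀, η₀) ∈ U ∧ (x₀, y₀) ∈ Ω ∧
      ∃ ψ : Euc n × Euc n → ℝ, ContDiffOn ℝ (⊤ : ℕ∞) ψ Ω ∧
        (∀ yη ∈ U,
          ((Φ t₀ yη).1, yη.1) ∈ Ω ∧
          (Φ t₀ yη).2 = gradient (fun x' => ψ (x', yη.1)) (Φ t₀ yη).1 ∧
          yη.2 = -gradient (fun y' => ψ ((Φ t₀ yη).1, y')) yη.1) ∧
        IsUnit (fderiv ℝ (fun y' => gradient (fun x' => ψ (x', y')) x₀) y₀) := by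
  obtain ⟨S, hS⟩ := action_fderiv n V hV Φ hΦ t₀
  obtain ⟨hs, h0, -, hgrp⟩ := hΦ
  have hΦs : ∀ t, ContDiff ℝ (⊤ : ℕ∞) (Φ t) := fun t =>
    hs.comp (contDiff_const.prodMk contDiff_id)
  have hΦd : ∀ t z, HasFDerivAt (Φ t) (fderiv ℝ (Φ t) z) z := fun t z =>
    ((hΦs t).differentiable (by simp) z).hasFDerivAt
  have hinj : ∀ z v, fderiv ℝ (Φ t₀) z v = 0 → v = 0 := by
    intro z v hv
    have h1 : HasFDerivAt (fun z => Φ (-t₀) (Φ t₀ z)) _ z := (hΦd (-t₀) (Φ t₀ z)).comp z (hΦd t₀ z)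
    have h2 : (fun z => Φ (-t₀) (Φ t₀ z)) = id := by
      funext z; rw [← hgrp]; simp [h0]
    rw [h2] at h1
    have h3 := congrArg (fun L => L v) (h1.unique (hasFDerivAt_id z))
    simpa [hv] using h3.symm
  -- S is smooth
  have hSs : ContDiff ℝ (⊤ : ℕ∞) S := by
    have hSf : fderiv ℝ S = fun z => (innerSL ℝ (Φ t₀ z).2).comp
        ((ContinuousLinearMap.fst ℝ (Euc n) (Euc n)).comp (fderiv ℝ (Φ t₀) z))
        - (innerSL ℝ z.2).comp (ContinuousLinearMap.fst ℝ (Euc n) (Euc n)) :=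
      funext fun z => (hS z).fderiv
    rw [contDiff_infty_iff_fderiv]
    refine ⟨fun z => (hS z).differentiableAt, ?_⟩
    rw [hSf]
    have h1 : ContDiff ℝ (⊤ : ℕ∞) (fderiv ℝ (Φ t₀)) := (hΦs t₀).fderiv_right (by simp)
    refine ContDiff.sub ?_ ?_
    · exact ((innerSL ℝ).contDiff.comp (hΦs t₀).snd).clm_comp (contDiff_const.clm_comp h1)
    · exact ((innerSL ℝ).contDiff.comp contDiff_snd).clm_comp contDiff_const
  -- the map G
  set G : Euc n × Euc n → Euc n × Euc n := fun z => ((Φ t₀ z).1, z.1) with hGdef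
  have hG : ContDiff ℝ (⊤ : ℕ∞) G := (hΦs t₀).fst.prodMk contDiff_fst
  have hGd : ∀ z, HasFDerivAt G (fderiv ℝ G z) z := fun z =>
    (hG.differentiable (by simp) z).hasFDerivAt
  have hGv : ∀ z v, fderiv ℝ G z v = ((fderiv ℝ (Φ t₀) z v).1, v.1) := by
    intro z v
    have h1 : HasFDerivAt G _ z := (hΦd t₀ z).fst.prodMk hasFDerivAt_fst
    rw [h1.fderiv]; rfl
  have hG0 : G (y₀, η₀) = (x₀, y₀) := by simp [hGdef, ← hxξ]
  have hunit0 : IsUnit (fderiv ℝ G (y₀, η₀)) := by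
    rw [ContinuousLinearMap.isUnit_iff_isUnit_toLinearMap, LinearMap.isUnit_iff_ker_eq_bot,
      LinearMap.ker_eq_bot']
    rintro ⟨a, b⟩ hab
    have hab' : fderiv ℝ G (y₀, η₀) (a, b) = 0 := hab
    rw [hGv, Prod.mk_eq_zero] at hab'
    obtain ⟨h1, h2⟩ := hab'
    have ha : a = 0 := h2
    subst ha
    have h3 : HasFDerivAt (fun η => (Φ t₀ (y₀, η)).1) _ η₀ :=
      ((hΦd t₀ (y₀, η₀)).comp η₀ (hasFDerivAt_prodMk_right y₀ η₀)).fst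
    have h4 : fderiv ℝ (fun η => (Φ t₀ (y₀, η)).1) η₀ b = 0 := by
      rw [h3.fderiv]; simpa using h1
    have h5 := (ContinuousLinearMap.isUnit_iff_bijective.1 hcf).1
    have : b = 0 := h5 (by rw [h4, map_zero])
    rw [this]; rfl
  have hequiv : ∀ z, IsUnit (fderiv ℝ G z) →
      ∃ L : (Euc n × Euc n) ≃L[ℝ] (Euc n × Euc n), HasFDerivAt G (L : _ →L[ℝ] _) z := by
    rintro z ⟨u, hu⟩
    refine ⟨ContinuousLinearEquiv.unitsEquiv ℝ _ u, ?_⟩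
    have : ((ContinuousLinearEquiv.unitsEquiv ℝ _ u : (Euc n × Euc n) ≃L[ℝ] (Euc n × Euc n)) :
      (Euc n × Euc n) →L[ℝ] (Euc n × Euc n)) = fderiv ℝ G z := by rw [← hu]; rfl
    rw [this]; exact hGd z
  obtain ⟨L0, hL0⟩ := hequiv _ hunit0
  set e := hG.contDiffAt.toOpenPartialHomeomorph G hL0 (by simp) with he
  have hecoe : ∀ z, e z = G z := fun z => rfl
  have hmem : (y₀, η₀) ∈ e.source :=
    hG.contDiffAt.mem_toOpenPartialHomeomorph_source hL0 (by simp)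
  set O : Set (Euc n × Euc n) := {z | IsUnit (fderiv ℝ G z)} with hO
  have hOo : IsOpen O := Units.isOpen.preimage (hG.continuous_fderiv (by simp))
  set U := e.source ∩ O with hU
  set Ω := e.target ∩ e.symm ⁻¹' O with hΩ
  have hΩo : IsOpen Ω := e.isOpen_inter_preimage_symm hOo
  have hUΩ : ∀ z ∈ U, G z ∈ Ω := by
    rintro z ⟨hz, hzO⟩
    refine ⟨e.map_source hz, ?_⟩
    have : e.symm (G z) = z := e.left_inv hz
    simpa [this] using hzO
  have hsymm : ∀ q ∈ Ω, ContDiffAt ℝ (⊤ : ℕ∞) e.symm q := by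
    rintro q ⟨hq, hqO⟩
    obtain ⟨L, hL⟩ := hequiv _ hqO
    exact e.contDiffAt_symm hq hL hG.contDiffAt
  have hsymmG : ∀ q ∈ Ω, (fun q => G (e.symm q)) =ᶠ[nhds q] id := by
    intro q hq
    filter_upwards [hΩo.mem_nhds hq] with p hp
    exact e.right_inv hp.1
  have hDsymm : ∀ q ∈ Ω, ∀ v, fderiv ℝ G (e.symm q) (fderiv ℝ e.symm q v) = v := by
    intro q hq v
    have h1 : HasFDerivAt (fun q => G (e.symm q)) _ q :=
      (hGd (e.symm q)).comp q ((hsymm q hq).differentiableAt (by simp)).hasFDerivAt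
    have h2 := (hasFDerivAt_id (𝕜 := ℝ) q).congr_of_eventuallyEq (hsymmG q hq)
    have h3 := congrArg (fun L : (Euc n × Euc n) →L[ℝ] (Euc n × Euc n) => L v) (h1.unique h2)
    simpa using h3
  set ψ : Euc n × Euc n → ℝ := fun q => S (e.symm q) with hψ
  have hψd : ∀ q ∈ Ω, HasFDerivAt ψ ((innerSL ℝ (Φ t₀ (e.symm q)).2).comp
      (ContinuousLinearMap.fst ℝ (Euc n) (Euc n)) -
      (innerSL ℝ (e.symm q).2).comp (ContinuousLinearMap.snd ℝ (Euc n) (Euc n))) q := by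
    intro q hq
    have h1 : HasFDerivAt ψ _ q :=
      (hS (e.symm q)).comp q ((hsymm q hq).differentiableAt (by simp)).hasFDerivAt
    convert! h1 using 1
    refine ContinuousLinearMap.ext fun v => ?_
    have h2 := hDsymm q hq v
    rw [hGv] at h2
    have h3 := congrArg Prod.fst h2
    have h4 := congrArg Prod.snd h2
    simp only at h3 h4
    simp [h3, h4]
  have hgx : ∀ x y, (x, y) ∈ Ω → gradient (fun x' => ψ (x', y)) x = (Φ t₀ (e.symm (x, y))).2 := by
    intro x y hq
    apply HasGradientAt.gradient
    rw [hasGradientAt_iff_hasFDerivAt]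
    have h1 : HasFDerivAt (fun x' => ψ (x', y)) _ x :=
      HasFDerivAt.comp (g := ψ) x (hψd _ hq) (hasFDerivAt_prodMk_left x y)
    convert! h1 using 1
    refine ContinuousLinearMap.ext fun v => ?_
    simp
  have hgy : ∀ x y, (x, y) ∈ Ω → gradient (fun y' => ψ (x, y')) y = -(e.symm (x, y)).2 := by
    intro x y hq
    apply HasGradientAt.gradient
    rw [hasGradientAt_iff_hasFDerivAt]
    have h1 : HasFDerivAt (fun y' => ψ (x, y')) _ y :=
      HasFDerivAt.comp (g := ψ) y (hψd _ hq) (hasFDerivAt_prodMk_right x y)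
    convert! h1 using 1
    refine ContinuousLinearMap.ext fun v => ?_
    simp
  have hq0 : (x₀, y₀) ∈ Ω := hG0 ▸ hUΩ _ ⟨hmem, hunit0⟩
  refine ⟨U, Ω, e.open_source.inter hOo, hΩo, ⟨hmem, hunit0⟩, hq0, ψ, ?_, ?_, ?_⟩
  · intro q hq
    exact (hSs.contDiffAt.comp q (hsymm q hq)).contDiffWithinAt
  · intro z hz
    have h1 : ((Φ t₀ z).1, z.1) ∈ Ω := hUΩ z hz
    have h2 : e.symm ((Φ t₀ z).1, z.1) = z := e.left_inv hz.1
    refine ⟨h1, ?_, ?_⟩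
    · rw [hgx _ _ h1, h2]
    · rw [hgy _ _ h1, h2, neg_neg]
  · have h1 : (fun y' => gradient (fun x' => ψ (x', y')) x₀) =ᶠ[nhds y₀]
        fun y' => (Φ t₀ (e.symm (x₀, y'))).2 := by
      have : ∀ᶠ y' in nhds y₀, (x₀, y') ∈ Ω :=
        (Continuous.prodMk_right x₀).continuousAt.eventually (hΩo.mem_nhds hq0)
      filter_upwards [this] with y' hy'
      exact hgx _ _ hy'
    rw [h1.fderiv_eq, ContinuousLinearMap.isUnit_iff_isUnit_toLinearMap,
      LinearMap.isUnit_iff_ker_eq_bot, LinearMap.ker_eq_bot']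
    intro v hv
    have hv' : fderiv ℝ (fun y' => (Φ t₀ (e.symm (x₀, y'))).2) y₀ v = 0 := hv
    have h2 : HasFDerivAt (fun y' => (Φ t₀ (e.symm (x₀, y'))).2) _ y₀ :=
      ((hΦd t₀ (e.symm (x₀, y₀))).comp y₀
        (((hsymm _ hq0).differentiableAt (by simp)).hasFDerivAt.comp y₀
          (hasFDerivAt_prodMk_right x₀ y₀))).snd
    rw [h2.fderiv] at hv'
    have h3 := hDsymm _ hq0 (0, v)
    rw [hGv] at h3
    have h4 := congrArg Prod.fst h3
    have h5 := congrArg Prod.snd h3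
    simp only at h4 h5
    have h6 := hinj _ _ (Prod.ext h4 (by simpa using hv'))
    rw [h6] at h5
    simpa using h5.symm
end
end

section
/- Let n ≥ 1, let V : ℝⁿ → ℝ be smooth, let Φ be a global Hamiltonian flow for V, and let t₀, (y₀,η₀), z₀, T × Y × Z and η̂ be as in the central field setting. For λ ∈ ℝ define the action S : T × Y × Z → ℝ by S(t,y,z) = ∫₀ᵗ (½‖ξ(s,y,η̂(t,y,z))‖² − V(x(s,y,η̂(t,y,z))) + λ) ds. Then S is smooth and, possibly after shrinking T × Y × Z around (t₀,y₀,z₀), for all (t,y,z) ∈ T × Y × Z: ∇_z S(t,y,z) = ξ(t, y, η̂(t,y,z)) and ∇_y S(t,y,z) = −η̂(t,y,z). -/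
open scoped RealInnerProductSpace
open Filter

noncomputable section

open intervalIntegral in
theorem aux_hasFDerivAt {H F : Type} [NormedAddCommGroup H] [NormedSpace ℝ H] [FiniteDimensional ℝ H]
    [NormedAddCommGroup F] [NormedSpace ℝ F] [CompleteSpace F]
    (f : H × ℝ → F) (hf : ContDiff ℝ 1 f) (a b : ℝ) (x₀ : H) :
    HasFDerivAt (fun x => ∫ u in a..b, f (x, u))
      (∫ u in a..b, (fderiv ℝ f (x₀, u)).comp (ContinuousLinearMap.inl ℝ H ℝ)) x₀ := by
  have hc : Continuous (fun q : H × ℝ => (fderiv ℝ f q).comp (ContinuousLinearMap.inl ℝ H ℝ)) :=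
    (hf.continuous_fderiv one_ne_zero).clm_comp continuous_const
  have hcomp : IsCompact (Metric.closedBall x₀ 1 ×ˢ Set.uIcc a b) :=
    (isCompact_closedBall x₀ 1).prod isCompact_uIcc
  obtain ⟨C, hC⟩ := hcomp.exists_bound_of_continuousOn hc.continuousOn
  refine hasFDerivAt_integral_of_dominated_of_fderiv_le (s := Metric.closedBall x₀ 1)
    (F := fun x u => f (x, u)) (bound := fun _ => C)
    (F' := fun x u => (fderiv ℝ f (x, u)).comp (ContinuousLinearMap.inl ℝ H ℝ))
    (Metric.closedBall_mem_nhds x₀ one_pos) ?_ ?_ ?_ ?_ ?_ ?_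
  · refine Eventually.of_forall fun x => ?_
    exact (hf.continuous.comp (by fun_prop : Continuous fun u : ℝ => (x, u))).aestronglyMeasurable
  · exact (hf.continuous.comp (by fun_prop : Continuous fun u : ℝ => (x₀, u))).intervalIntegrable _ _
  · exact (hc.comp (by fun_prop : Continuous fun u : ℝ => (x₀, u))).aestronglyMeasurable
  · refine Eventually.of_forall fun u hu x hx => ?_
    exact hC (x, u) ⟨hx, Set.uIoc_subset_uIcc hu⟩
  · exact intervalIntegrable_const
  · refine Eventually.of_forall fun u hu x hx => ?_
    have h1 : HasFDerivAt f (fderiv ℝ f (x, u)) (x, u) :=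
      (hf.differentiable one_ne_zero _).hasFDerivAt
    exact h1.comp x (hasFDerivAt_prodMk_left x u)

theorem aux_contDiff_nat {H : Type} [NormedAddCommGroup H] [NormedSpace ℝ H]
    [FiniteDimensional ℝ H] (a b : ℝ) (k : ℕ) : ∀ {F : Type} [NormedAddCommGroup F]
    [NormedSpace ℝ F] [CompleteSpace F]
    (f : H × ℝ → F) (_ : ContDiff ℝ (⊤ : ℕ∞) f),
    ContDiff ℝ k (fun x => ∫ u in a..b, f (x, u)) := by
  induction k with
  | zero =>
    intro F _ _ _ f hf
    rw [Nat.cast_zero, contDiff_zero]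
    exact intervalIntegral.continuous_parametric_intervalIntegral_of_continuous'
      (f := fun x u => f (x, u)) (by simpa [Function.uncurry_def] using hf.continuous) a b
  | succ k ih =>
    intro F _ _ _ f hf
    have h1 : ContDiff ℝ 1 f := hf.of_le (by exact_mod_cast le_top)
    have hd := fun x => aux_hasFDerivAt f h1 a b x
    push_cast
    rw [contDiff_succ_iff_fderiv]
    refine ⟨fun x => (hd x).differentiableAt, by simp, ?_⟩
    have : fderiv ℝ (fun x => ∫ u in a..b, f (x, u)) = fun x =>
        ∫ u in a..b, (fderiv ℝ f (x, u)).comp (ContinuousLinearMap.inl ℝ H ℝ) :=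
      funext fun x => (hd x).fderiv
    rw [this]
    exact ih (fun q : H × ℝ => (fderiv ℝ f q).comp (ContinuousLinearMap.inl ℝ H ℝ))
      ((hf.fderiv_right (m := (⊤ : ℕ∞)) (by simp)).clm_comp contDiff_const)

theorem aux_contDiff {H F : Type} [NormedAddCommGroup H] [NormedSpace ℝ H]
    [FiniteDimensional ℝ H] [NormedAddCommGroup F]
    [NormedSpace ℝ F] [CompleteSpace F] (a b : ℝ)
    (f : H × ℝ → F) (hf : ContDiff ℝ (⊤ : ℕ∞) f) :
    ContDiff ℝ (⊤ : ℕ∞) (fun x => ∫ u in a..b, f (x, u)) :=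
  contDiff_infty.2 fun k => aux_contDiff_nat a b k f hf

/-- first variation of the action -/
theorem aux_variation {n : ℕ} (V : Euc n → ℝ) (hV : ContDiff ℝ (⊤ : ℕ∞) V)
    (Φ : ℝ → Euc n × Euc n → Euc n × Euc n) (hΦ : IsGlobalHamFlow n V Φ) (lam t : ℝ)
    (q : Euc n × Euc n) :
    HasFDerivAt (fun q : Euc n × Euc n => ∫ s in (0:ℝ)..t,
      ((1 / 2) * ‖(Φ s q).2‖ ^ 2 - V (Φ s q).1 + lam))
      ((innerSL ℝ (Φ t q).2).comp (fderiv ℝ (fun q => (Φ t q).1) q) -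
        (innerSL ℝ q.2).comp (ContinuousLinearMap.fst ℝ _ _)) q := by
  obtain ⟨hsm, h0, hode, -⟩ := hΦ
  -- swapped-argument smooth maps
  have hsw : ContDiff ℝ (⊤ : ℕ∞) (fun r : (Euc n × Euc n) × ℝ => Φ r.2 r.1) :=
    hsm.comp (contDiff_snd.prodMk contDiff_fst)
  set X : (Euc n × Euc n) × ℝ → Euc n := fun r => (Φ r.2 r.1).1 with hX
  set Ξ : (Euc n × Euc n) × ℝ → Euc n := fun r => (Φ r.2 r.1).2 with hΞ
  have hXs : ContDiff ℝ (⊤ : ℕ∞) X := hsw.fst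
  have hΞs : ContDiff ℝ (⊤ : ℕ∞) Ξ := hsw.snd
  have hne : ((⊤ : ℕ∞) : WithTop ℕ∞) ≠ 0 := by simp
  have hXd : ∀ r, HasFDerivAt X (fderiv ℝ X r) r := fun r => (hXs.differentiable hne r).hasFDerivAt
  have hΞd : ∀ r, HasFDerivAt Ξ (fderiv ℝ Ξ r) r := fun r => (hΞs.differentiable hne r).hasFDerivAt
  have hVd : ∀ x, HasFDerivAt V (innerSL ℝ (gradient V x)) x := fun x =>
    (hV.differentiable hne x).hasGradientAt.hasFDerivAt
  have hdX : ∀ s q, HasDerivAt (fun s => X (q, s)) (Ξ (q, s)) s := fun s q => (hode s q).fst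
  have hdΞ : ∀ s q, HasDerivAt (fun s => Ξ (q, s)) (-gradient V (X (q, s))) s :=
    fun s q => (hode s q).snd
  have hXt : ∀ r, fderiv ℝ X r (0, 1) = Ξ r := by
    rintro ⟨q, s⟩
    have h1 := (hXd (q, s)).comp_hasDerivAt s ((hasDerivAt_const s q).prodMk (hasDerivAt_id s))
    exact h1.unique (hdX s q)
  have hX2 : ContDiff ℝ (⊤ : ℕ∞) (fderiv ℝ X) := hXs.fderiv_right (by simp)
  have hX2d : ∀ r, HasFDerivAt (fderiv ℝ X) (fderiv ℝ (fderiv ℝ X) r) r :=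
    fun r => (hX2.differentiable hne r).hasFDerivAt
  have hmix : ∀ s (p : Euc n × Euc n),
      HasDerivAt (fun s => fderiv ℝ X (q, s) (p, 0)) (fderiv ℝ Ξ (q, s) (p, 0)) s := by
    intro s p
    have h1 := (hX2d (q, s)).comp_hasDerivAt s ((hasDerivAt_const s q).prodMk (hasDerivAt_id s))
    have h2 := h1.clm_apply (hasDerivAt_const s ((p, 0) : (Euc n × Euc n) × ℝ))
    have hsymm : fderiv ℝ (fderiv ℝ X) (q, s) (0, 1) (p, 0)
        = fderiv ℝ (fderiv ℝ X) (q, s) (p, 0) (0, 1) :=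
      (hXs.contDiffAt.isSymmSndFDerivAt
        (by simp only [minSmoothness_of_isRCLikeNormedField]
            exact WithTop.coe_le_coe.2 (le_top : (2 : ℕ∞) ≤ ⊤))) (0, 1) (p, 0)
    have h3 : fderiv ℝ Ξ (q, s) (p, 0) = fderiv ℝ (fderiv ℝ X) (q, s) (p, 0) (0, 1) := by
      have h4 := (hX2d (q, s)).clm_apply (hasFDerivAt_const ((0, 1) : (Euc n × Euc n) × ℝ) (q, s))
      have h5 : (fun r => fderiv ℝ X r (0, 1)) = Ξ := funext hXt
      rw [h5] at h4
      rw [h4.fderiv]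
      simp
    rw [h3, ← hsymm]
    simpa using h2
  set L : (Euc n × Euc n) × ℝ → ℝ := fun r => (1 / 2) * ‖Ξ r‖ ^ 2 - V (X r) + lam with hL
  have hLs : ContDiff ℝ (⊤ : ℕ∞) L :=
    ((contDiff_const.mul (hΞs.norm_sq ℝ)).sub (hV.comp hXs)).add contDiff_const
  have hLd : ∀ r v, fderiv ℝ L r v = inner ℝ (Ξ r) (fderiv ℝ Ξ r v)
      - inner ℝ (gradient V (X r)) (fderiv ℝ X r v) := by
    intro r v
    have h1 := ((((hΞd r).norm_sq).const_mul (1/2 : ℝ)).sub ((hVd (X r)).comp r (hXd r))).add_const lam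
    have h2 : HasFDerivAt L _ r := h1
    rw [h2.fderiv]
    simp
  have key := aux_hasFDerivAt L (hLs.of_le (by exact_mod_cast le_top)) 0 t q
  refine key.congr_fderiv ?_
  refine ContinuousLinearMap.ext fun p => ?_
  have hLc : Continuous (fderiv ℝ L) := hLs.continuous_fderiv hne
  have hcc : Continuous fun s : ℝ =>
      (fderiv ℝ L (q, s)).comp (ContinuousLinearMap.inl ℝ (Euc n × Euc n) ℝ) :=
    (hLc.comp (by fun_prop : Continuous fun u : ℝ => (q, u))).clm_comp continuous_const
  rw [ContinuousLinearMap.intervalIntegral_apply (hcc.intervalIntegrable _ _)]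
  have hFTC : ∀ s ∈ Set.uIcc (0:ℝ) t, HasDerivAt (fun s => inner ℝ (Ξ (q, s)) (fderiv ℝ X (q, s) (p, 0)))
      (((fderiv ℝ L (q, s)).comp (ContinuousLinearMap.inl ℝ (Euc n × Euc n) ℝ)) p) s := by
    intro s _
    have := (hdΞ s q).inner ℝ (hmix s p)
    refine this.congr_deriv ?_
    simp [hLd]
    ring
  rw [intervalIntegral.integral_eq_sub_of_hasDerivAt hFTC
    ((hcc.clm_apply continuous_const).intervalIntegrable _ _)]
  have hpart : ∀ s, HasFDerivAt (fun q => (Φ s q).1)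
      ((fderiv ℝ X (q, s)).comp (ContinuousLinearMap.inl ℝ (Euc n × Euc n) ℝ)) q := fun s =>
    HasFDerivAt.comp (g := X) (f := fun q' => (q', s)) q (hXd (q, s)) (hasFDerivAt_prodMk_left q s)
  have hz : fderiv ℝ X (q, 0) (p, 0) = p.1 := by
    have h1 := hpart 0
    simp only [h0] at h1
    have h2 := congrArg (fun A => A p) (h1.unique hasFDerivAt_fst)
    simpa using h2
  rw [hz, (hpart t).fderiv]
  simp [hΞ, h0]

/-- **Spatial derivatives of the action.**  In the central field setting with action
`S(t,y,z) = ∫₀ᵗ (½‖ξ(s,y,η̂(t,y,z))‖² − V(x(s,y,η̂(t,y,z))) + λ) ds`, the action is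
smooth and, possibly after shrinking `T × Y × Z` around `(t₀, y₀, z₀)`,
`∇_z S(t,y,z) = ξ(t, y, η̂(t,y,z))` and `∇_y S(t,y,z) = −η̂(t,y,z)`. -/
theorem action_gradients
    (n : ℕ) (hn : 1 ≤ n)
    (V : Euc n → ℝ) (hV : ContDiff ℝ (⊤ : ℕ∞) V)
    (Φ : ℝ → Euc n × Euc n → Euc n × Euc n) (hΦ : IsGlobalHamFlow n V Φ)
    (t₀ : ℝ) (y₀ η₀ z₀ : Euc n) (hz₀ : z₀ = (Φ t₀ (y₀, η₀)).1)
    (hcf : IsUnit (fderiv ℝ (fun η => (Φ t₀ (y₀, η)).1) η₀))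
    (T : Set ℝ) (Y Z : Set (Euc n))
    (hT : IsOpen T) (hY : IsOpen Y) (hZ : IsOpen Z)
    (hconn : IsConnected (T ×ˢ Y ×ˢ Z))
    (ht₀ : t₀ ∈ T) (hy₀ : y₀ ∈ Y) (hz₀mem : z₀ ∈ Z)
    (ηh : ℝ → Euc n → Euc n → Euc n)
    (hηsmooth : ContDiffOn ℝ (⊤ : ℕ∞) (fun q : ℝ × Euc n × Euc n => ηh q.1 q.2.1 q.2.2)
      (T ×ˢ Y ×ˢ Z))
    (hη₀ : ηh t₀ y₀ z₀ = η₀)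
    (hsolve : ∀ t ∈ T, ∀ y ∈ Y, ∀ z ∈ Z, (Φ t (y, ηh t y z)).1 = z)
    (lam : ℝ) (S : ℝ → Euc n → Euc n → ℝ)
    (hS : ∀ t y z, S t y z = ∫ s in (0:ℝ)..t,
      ((1 / 2) * ‖(Φ s (y, ηh t y z)).2‖ ^ 2 - V (Φ s (y, ηh t y z)).1 + lam))
    :
    ContDiffOn ℝ (⊤ : ℕ∞) (fun q : ℝ × Euc n × Euc n => S q.1 q.2.1 q.2.2) (T ×ˢ Y ×ˢ Z) ∧
    ∃ (T' : Set ℝ) (Y' Z' : Set (Euc n)),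
      IsOpen T' ∧ IsOpen Y' ∧ IsOpen Z' ∧
      T' ⊆ T ∧ Y' ⊆ Y ∧ Z' ⊆ Z ∧
      t₀ ∈ T' ∧ y₀ ∈ Y' ∧ z₀ ∈ Z' ∧
      ∀ t ∈ T', ∀ y ∈ Y', ∀ z ∈ Z',
        gradient (fun z' => S t y z') z = (Φ t (y, ηh t y z)).2 ∧
        gradient (fun y' => S t y' z) y = -(ηh t y z) := by
  have hsm := hΦ.1
  have hprod : IsOpen (T ×ˢ Y ×ˢ Z) := hT.prod (hY.prod hZ)
  constructor
  · set L : Euc n × Euc n → ℝ := fun w => (1 / 2) * ‖w.2‖ ^ 2 - V w.1 + lam with hL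
    have hLs : ContDiff ℝ (⊤ : ℕ∞) L :=
      ((contDiff_const.mul (contDiff_snd.norm_sq ℝ)).sub (hV.comp contDiff_fst)).add contDiff_const
    have hG : ContDiff ℝ (⊤ : ℕ∞) (fun r : ℝ × (Euc n × Euc n) =>
        r.1 * ∫ u in (0:ℝ)..1, L (Φ (r.1 * u) r.2)) := by
      refine contDiff_fst.mul (aux_contDiff 0 1
        (fun w : (ℝ × (Euc n × Euc n)) × ℝ => L (Φ (w.1.1 * w.2) w.1.2)) ?_)
      exact hLs.comp (hsm.comp (by fun_prop :
        ContDiff ℝ (⊤ : ℕ∞) fun w : (ℝ × (Euc n × Euc n)) × ℝ => (w.1.1 * w.2, w.1.2)))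
    have hSG : (fun q : ℝ × Euc n × Euc n => S q.1 q.2.1 q.2.2) =
        (fun r : ℝ × (Euc n × Euc n) => r.1 * ∫ u in (0:ℝ)..1, L (Φ (r.1 * u) r.2)) ∘
          (fun q : ℝ × Euc n × Euc n => (q.1, (q.2.1, ηh q.1 q.2.1 q.2.2))) := by
      funext q
      have := intervalIntegral.smul_integral_comp_mul_left (a := 0) (b := 1)
        (fun s => L (Φ s (q.2.1, ηh q.1 q.2.1 q.2.2))) q.1
      simp only [mul_zero, mul_one, smul_eq_mul] at this
      exact (hS _ _ _).trans this.symm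
    rw [hSG]
    exact hG.comp_contDiffOn (contDiffOn_fst.prodMk
      ((contDiff_fst.comp contDiff_snd).contDiffOn.prodMk hηsmooth))
  · refine ⟨T, Y, Z, hT, hY, hZ, subset_rfl, subset_rfl, subset_rfl, ht₀, hy₀, hz₀mem, ?_⟩
    intro t ht y hy z hz
    have hηd : HasFDerivAt (fun q : ℝ × Euc n × Euc n => ηh q.1 q.2.1 q.2.2)
        (fderiv ℝ (fun q : ℝ × Euc n × Euc n => ηh q.1 q.2.1 q.2.2) (t, y, z)) (t, y, z) :=
      ((hηsmooth.contDiffAt (hprod.mem_nhds ⟨ht, hy, hz⟩)).differentiableAt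
        (by simp)).hasFDerivAt
    have hηz := HasFDerivAt.comp (f := fun z' => (t, y, z')) z hηd ((hasFDerivAt_const t z).prodMk (hasFDerivAt_prodMk_right y z))
    have hηy := HasFDerivAt.comp (f := fun y' => (t, y', z)) y hηd ((hasFDerivAt_const t y).prodMk (hasFDerivAt_prodMk_left y z))
    have hvar := aux_variation V hV Φ hΦ lam t (y, ηh t y z)
    have hx : HasFDerivAt (fun q => (Φ t q).1) (fderiv ℝ (fun q => (Φ t q).1) (y, ηh t y z))
        (y, ηh t y z) := by
      have : ContDiff ℝ (⊤ : ℕ∞) (fun q => (Φ t q).1) :=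
        (hsm.comp (contDiff_const.prodMk contDiff_id)).fst
      exact (this.differentiable (by simp) _).hasFDerivAt
    have hpz := (hasFDerivAt_const y z).prodMk hηz
    have hpy := (hasFDerivAt_id y).prodMk hηy
    constructor
    · apply HasGradientAt.gradient
      rw [hasGradientAt_iff_hasFDerivAt]
      have h1 := HasFDerivAt.comp (f := fun z' => (y, ηh t y z')) z hvar hpz
      have h2 := HasFDerivAt.comp (f := fun z' => (y, ηh t y z')) z hx hpz
      have h3 := h2.unique ((hasFDerivAt_id z).congr_of_eventuallyEq
        (Filter.eventuallyEq_of_mem (hZ.mem_nhds hz) fun z' hz' => hsolve t ht y hy z' hz'))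
      have h4 : (fun z' => S t y z') = _ := funext fun z' => hS t y z'
      rw [h4]
      refine HasFDerivAt.congr_fderiv h1 ?_
      refine ContinuousLinearMap.ext fun w => ?_
      have h5 := congrArg (fun A => A w) h3
      simp only [ContinuousLinearMap.comp_apply, sub_apply] at h5 ⊢
      rw [h5]
      simp
    · apply HasGradientAt.gradient
      rw [hasGradientAt_iff_hasFDerivAt]
      have h1 := HasFDerivAt.comp (f := fun y' => (y', ηh t y' z)) y hvar hpy
      have h2 := HasFDerivAt.comp (f := fun y' => (y', ηh t y' z)) y hx hpy
      have h3 := h2.unique ((hasFDerivAt_const z y).congr_of_eventuallyEq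
        (Filter.eventuallyEq_of_mem (hY.mem_nhds hy) fun y' hy' => hsolve t ht y' hy' z hz))
      have h4 : (fun y' => S t y' z) = _ := funext fun y' => hS t y' z
      rw [h4]
      refine HasFDerivAt.congr_fderiv h1 ?_
      refine ContinuousLinearMap.ext fun w => ?_
      have h5 := congrArg (fun A => A w) h3
      simp only [ContinuousLinearMap.comp_apply, sub_apply] at h5 ⊢
      rw [h5]
      simp
end
end
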